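/- For every permutation w of {1,…,n}, the coefficient of A^{n²−ℓ(w)} in the generic pipe dream polynomial G_w, viewed as a polynomial in A with coefficients in ℤ[x₁,…,xₙ,y₁,…,yₙ,B], equals the sum over all bumpless-reduced δ ∈ GPDs(w) of the product over all blank tiles at positions (i,j) of δ of (B − x_i + y_j); moreover this sum equals the double Schubert polynomial S_{w₀ w w₀} evaluated at (B−x_n, B−x_{n−1}, …, B−x_1; −y_n, −y_{n−1}, …, −y_1), where w₀ is the longest permutation. -/

import Mathlib

open scoped Classical

namespace GPDpaper

/-- Raw data of a pipe-filling of the `n × n` grid: `d.1 i j` is the (optional) pipe label on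
the vertical edge at row `i`, West of column `j` (so `d.1 i 0` is on the West boundary and
`d.1 i (Fin.last n)` on the East boundary); `d.2 i j` is the label on the horizontal edge
North of row `i` in column `j` (so `d.2 0 j` is on the North boundary and
`d.2 (Fin.last n) j` on the South boundary).  Rows are numbered from the top. -/
abbrev Pipes (n : ℕ) :=
  (Fin n → Fin (n+1) → Option (Fin n)) × (Fin (n+1) → Fin n → Option (Fin n))

variable {n : ℕ}

/-- Label on the West edge of square `(i,j)`. -/
def We (d : Pipes n) (i j : Fin n) : Option (Fin n) := d.1 i j.castSucc
/-- Label on the East edge of square `(i,j)`. -/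
def Ea (d : Pipes n) (i j : Fin n) : Option (Fin n) := d.1 i j.succ
/-- Label on the North edge of square `(i,j)`. -/
def No (d : Pipes n) (i j : Fin n) : Option (Fin n) := d.2 i.castSucc j
/-- Label on the South edge of square `(i,j)`. -/
def So (d : Pipes n) (i j : Fin n) : Option (Fin n) := d.2 i.succ j

/-- The local condition making `d` a generic pipe dream: at each square, the pair of labels
leaving through the East and North edges is either `(W,S)` (cross/horizontal/vertical/blank
tile) or `(S,W)` (bump/elbow/blank tile); moreover two edges of the same square never carry
the same pipe label. -/
def IsValid (d : Pipes n) : Prop :=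
  ∀ i j : Fin n,
    ((Ea d i j, No d i j) = (We d i j, So d i j) ∨
     (Ea d i j, No d i j) = (So d i j, We d i j)) ∧
    (We d i j = So d i j → We d i j = none)

/-- The seven generic pipe dream tiles. -/
inductive Tile where
  | cross | bump | nw | se | horiz | vert | blank
deriving DecidableEq

/-- The tile of a pipe-filling at square `(i,j)`. -/
def tile (d : Pipes n) (i j : Fin n) : Tile :=
  match We d i j, So d i j with
  | some a, some _ => if Ea d i j = some a then .cross else .bump
  | some _, none => if No d i j = none then .horiz else .nw
  | none, some _ => if No d i j = none then .se else .vert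
  | none, none => .blank

/-- `d` is a generic pipe dream for the permutation `w`: it is locally valid, the pipe
entering the West boundary in row `i` is labelled `i`, no pipes meet the East and South
boundaries, and the pipe exiting the North boundary in column `j` is labelled `w⁻¹(j)`. -/
def IsGPDof (w : Equiv.Perm (Fin n)) (d : Pipes n) : Prop :=
  IsValid d ∧
  (∀ i : Fin n, d.1 i 0 = some i) ∧
  (∀ i : Fin n, d.1 i (Fin.last n) = none) ∧
  (∀ j : Fin n, d.2 (Fin.last n) j = none) ∧
  (∀ j : Fin n, d.2 0 j = some (w.symm j))

/-- Number of tiles of `d` of a given type. -/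
noncomputable def tileCount (d : Pipes n) (t : Tile) : ℕ :=
  (Finset.univ.filter (fun p : Fin n × Fin n => tile d p.1 p.2 = t)).card

/-- The pipes labelled `p` and `q` cross at the tile `(i,j)`. -/
def CrossesAt (d : Pipes n) (p q : Fin n) (i j : Fin n) : Prop :=
  tile d i j = .cross ∧
  ((We d i j = some p ∧ So d i j = some q) ∨ (We d i j = some q ∧ So d i j = some p))

/-- The number of tiles at which the pipes labelled `p` and `q` cross. -/
noncomputable def crossCount (d : Pipes n) (p q : Fin n) : ℕ :=
  (Finset.univ.filter (fun ij : Fin n × Fin n => CrossesAt d p q ij.1 ij.2)).card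

/-- No two pipes of `d` cross each other at more than one tile. -/
def NoDoubleCross (d : Pipes n) : Prop := ∀ p q : Fin n, crossCount d p q ≤ 1

/-- Number of inversions (Coxeter length) of a permutation. -/
def invCount (w : Equiv.Perm (Fin n)) : ℕ :=
  (Finset.univ.filter (fun p : Fin n × Fin n => p.1 < p.2 ∧ w p.2 < w p.1)).card

/-- Classic pipe dream (in 1-indexed terms: crosses and bumps for `i+j ≤ n`, NW-elbows on the
antidiagonal `i+j = n+1`, blanks below, and no two pipes crossing twice). -/
def IsClassic (d : Pipes n) : Prop :=
  (∀ i j : Fin n, (i : ℕ) + (j : ℕ) + 2 ≤ n → tile d i j = .cross ∨ tile d i j = .bump) ∧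
  (∀ i j : Fin n, (i : ℕ) + (j : ℕ) + 2 = n + 1 → tile d i j = .nw) ∧
  (∀ i j : Fin n, (i : ℕ) + (j : ℕ) + 2 > n + 1 → tile d i j = .blank) ∧
  NoDoubleCross d

/-- Bumpless-reduced: no bump tiles and no two pipes crossing twice. -/
def IsBumplessReduced (d : Pipes n) : Prop :=
  (∀ i j : Fin n, tile d i j ≠ .bump) ∧ NoDoubleCross d


/-- Variables `x₁,…,xₙ, y₁,…,yₙ, B` (the coefficient ring for polynomials in `A`). -/
inductive XYB (n : ℕ) where
  | x (i : Fin n) | y (j : Fin n) | B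

/-- Variables `x₁,…,xₙ, y₁,…,yₙ` of double Schubert polynomials. -/
inductive XY (n : ℕ) where
  | x (i : Fin n) | y (j : Fin n)

/-- The weight of a generic pipe dream, viewed as a polynomial in the variable `A` with
coefficients in `ℤ[x₁,…,xₙ,y₁,…,yₙ,B]`. -/
noncomputable def wtA (d : Pipes n) : Polynomial (MvPolynomial (XYB n) ℤ) :=
  ∏ i : Fin n, ∏ j : Fin n,
    match tile d i j with
    | .cross | .horiz | .vert =>
        Polynomial.X + Polynomial.C (MvPolynomial.X (XYB.x i) - MvPolynomial.X (XYB.y j))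
    | .blank =>
        Polynomial.C (MvPolynomial.X XYB.B - MvPolynomial.X (XYB.x i) + MvPolynomial.X (XYB.y j))
    | _ => Polynomial.X + Polynomial.C (MvPolynomial.X XYB.B)

/-- The generic pipe dream polynomial `G_w`, as a polynomial in `A`. -/
noncomputable def GA (w : Equiv.Perm (Fin n)) : Polynomial (MvPolynomial (XYB n) ℤ) :=
  ∑ d ∈ Finset.univ.filter (fun d : Pipes n => IsGPDof w d), wtA d

/-- The adjacent transposition `sᵢ` exchanging `i` and `i+1` (0-indexed). -/
def adjSwap (i : Fin n) (hi : (i : ℕ) + 1 < n) : Equiv.Perm (Fin n) :=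
  Equiv.swap i ⟨(i : ℕ) + 1, hi⟩

/-! ### Words along the frontier, crossing parity -/

def WeakValid (d : Pipes n) : Prop :=
  ∀ i j : Fin n,
    ((Ea d i j, No d i j) = (We d i j, So d i j) ∨
     (Ea d i j, No d i j) = (So d i j, We d i j))

def VV (d : Pipes n) (i j : ℕ) : Option (Fin n) :=
  if h : i < n ∧ j < n + 1 then d.1 ⟨i, h.1⟩ ⟨j, h.2⟩ else none

def HH (d : Pipes n) (i j : ℕ) : Option (Fin n) :=
  if h : i < n + 1 ∧ j < n then d.2 ⟨i, h.1⟩ ⟨j, h.2⟩ else none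

def Om (d : Pipes n) (i j m : ℕ) : Option (Fin n) :=
  if m < i then VV d m 0 else if m < i + j then HH d i (m - i)
  else if m = i + j then VV d i j else HH d (i + 1) (m - i - 1)

def Om0 (n m : ℕ) : Option (Fin n) := if h : m < n then some ⟨m, h⟩ else none

lemma Om0_eq_some {n m : ℕ} {p : Fin n} : Om0 n m = some p ↔ m = p := by
  unfold Om0
  split_ifs with h
  · simp [Fin.ext_iff]
  · simp; omega

noncomputable def chi (d : Pipes n) (p q : Fin n) (i j : ℕ) : ℕ :=
  if h : i < n ∧ j < n then (if CrossesAt d p q ⟨i, h.1⟩ ⟨j, h.2⟩ then 1 else 0) else 0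

noncomputable def cnt (d : Pipes n) (p q : Fin n) (i j : ℕ) : ℕ :=
  ∑ a ∈ Finset.Ico (i+1) n, ∑ b ∈ Finset.range n, chi d p q a b +
    ∑ b ∈ Finset.range j, chi d p q i b

def Inv (d : Pipes n) (i j : ℕ) : Prop :=
  ∃ π : Equiv.Perm ℕ, (∀ m, Om d i j m = Om0 n (π m)) ∧
    ∀ p q : Fin n, p < q → (π.symm q < π.symm p ↔ Odd (cnt d p q i j))

lemma swap_flip (m a b : ℕ) (hab : a ≠ b) :
    (Equiv.swap m (m+1) b < Equiv.swap m (m+1) a) ↔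
      ((b < a) ↔ ¬ ((a = m ∧ b = m+1) ∨ (b = m ∧ a = m+1))) := by
  simp only [Equiv.swap_apply_def]
  split_ifs <;> omega

lemma crossesAt_iff (d : Pipes n) (p q i j : Fin n) :
    CrossesAt d p q i j ↔ Ea d i j = We d i j ∧
      ((We d i j = some p ∧ So d i j = some q) ∨ (We d i j = some q ∧ So d i j = some p)) := by
  unfold CrossesAt tile
  rcases hW : We d i j with _ | a <;> rcases hS : So d i j with _ | b <;> simp

lemma Inv_step (d : Pipes n) (hv : WeakValid d) (i j : ℕ) (hi : i < n) (hj : j < n)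
    (h : Inv d i j) : Inv d i (j+1) := by
  obtain ⟨π, h1, h2⟩ := h
  have hW : Om d i j (i+j) = We d ⟨i, hi⟩ ⟨j, hj⟩ := by
    simp [Om, VV, hi, We, Nat.lt_succ_of_lt hj]
  have hS : Om d i j (i+j+1) = So d ⟨i, hi⟩ ⟨j, hj⟩ := by
    have : ¬ (i + j + 1 < i) := by omega
    have h3 : i + j + 1 - i - 1 = j := by omega
    simp [Om, HH, this, h3, So, hj, hi]
  have hN : Om d i (j+1) (i+j) = No d ⟨i, hi⟩ ⟨j, hj⟩ := by
    simp [Om, HH, No, hj, Nat.lt_succ_of_lt hi]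
  have hE : Om d i (j+1) (i+j+1) = Ea d ⟨i, hi⟩ ⟨j, hj⟩ := by
    have : ¬ (i + j + 1 < i) := by omega
    have h4 : ¬ (i + j + 1 < i + (j+1)) := by omega
    have h5 : (i + j + 1 = i + (j+1)) := by omega
    simp [Om, VV, this, h5, Ea, hj, hi]
  have hO : ∀ m, m ≠ i + j → m ≠ i + j + 1 → Om d i (j+1) m = Om d i j m := by
    intro m hm1 hm2
    unfold Om
    split_ifs <;> first | rfl | omega
  have hc : ∀ p q, cnt d p q i (j+1) =
      cnt d p q i j + (if CrossesAt d p q ⟨i, hi⟩ ⟨j, hj⟩ then 1 else 0) := by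
    intro p q
    simp [cnt, Finset.sum_range_succ, chi, hi, hj, add_assoc]
  rw [h1] at hW hS
  rcases hv ⟨i, hi⟩ ⟨j, hj⟩ with hx | hx
  · -- cross type
    simp only [Prod.mk.injEq] at hx
    refine ⟨π * Equiv.swap (i+j) (i+j+1), ?_, ?_⟩
    · intro m
      by_cases hm1 : m = i + j
      · subst hm1
        simp [hN, hx.2, hS]
      by_cases hm2 : m = i + j + 1
      · subst hm2
        simp [hE, hx.1, hW]
      rw [hO m hm1 hm2, h1]
      simp [Equiv.swap_apply_of_ne_of_ne hm1 hm2]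
    · intro p q hpq
      have hne : π.symm p ≠ π.symm q := by
        intro h; have := π.symm.injective h; exact absurd hpq (by simp [Fin.lt_def, this])
      have key := swap_flip (i+j) (π.symm p) (π.symm q) hne
      have e : ∀ x : ℕ, (π * Equiv.swap (i+j) (i+j+1)).symm x
        = Equiv.swap (i+j) (i+j+1) (π.symm x) := by
        intro x; simp [← Equiv.Perm.inv_def]
      rw [e, e, key, h2 p q hpq, hc, crossesAt_iff, ← hW, ← hS, Om0_eq_some, Om0_eq_some,
        Om0_eq_some, Om0_eq_some]
      simp only [hx.1, ← hW, true_and, Equiv.symm_apply_eq]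
      by_cases hh : ((π (i+j) = (p:ℕ) ∧ π (i+j+1) = (q:ℕ)) ∨ (π (i+j) = (q:ℕ) ∧ π (i+j+1) = (p:ℕ)))
      · have hh' : (((p:ℕ) = π (i+j) ∧ (q:ℕ) = π (i+j+1)) ∨ ((q:ℕ) = π (i+j) ∧ (p:ℕ) = π (i+j+1))) := by
          rcases hh with hh | hh
          · exact Or.inl ⟨hh.1.symm, hh.2.symm⟩
          · exact Or.inr ⟨hh.1.symm, hh.2.symm⟩
        simp only [hh, hh', not_true, iff_false, if_true, Nat.odd_add_one]
      · have hh' : ¬ (((p:ℕ) = π (i+j) ∧ (q:ℕ) = π (i+j+1)) ∨ ((q:ℕ) = π (i+j) ∧ (p:ℕ) = π (i+j+1))) := by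
          intro h; apply hh
          rcases h with h | h
          · exact Or.inl ⟨h.1.symm, h.2.symm⟩
          · exact Or.inr ⟨h.1.symm, h.2.symm⟩
        simp only [hh, hh', not_false_iff, iff_true, if_false, add_zero]
  · simp only [Prod.mk.injEq] at hx
    refine ⟨π, ?_, ?_⟩
    · intro m
      by_cases hm1 : m = i + j
      · subst hm1
        simp [hN, hx.2, hW]
      by_cases hm2 : m = i + j + 1
      · subst hm2
        simp [hE, hx.1, hS]
      rw [hO m hm1 hm2, h1]
    · intro p q hpq
      rw [h2 p q hpq, hc, if_neg]
      · simp
      · rw [crossesAt_iff, hx.1]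
        rintro ⟨h3, h4⟩
        rw [h3] at h4
        rcases h4 with ⟨h4, h5⟩ | ⟨h4, h5⟩ <;>
        · rw [h4] at h5
          simp at h5
          subst h5
          exact absurd hpq (lt_irrefl _)

lemma Inv_all (d : Pipes n) (hv : WeakValid d) (hw : ∀ i : Fin n, d.1 i 0 = some i)
    (he : ∀ i : Fin n, d.1 i (Fin.last n) = none) (hs : ∀ j : Fin n, d.2 (Fin.last n) j = none)
    (r i j : ℕ) (hi : i + r + 1 = n) (hj : j ≤ n) : Inv d i j := by
  have hVV : ∀ m (hm : m < n), VV d m 0 = some ⟨m, hm⟩ := by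
    intro m hm
    simp only [VV, hm, Nat.succ_pos, true_and, dite_true]
    exact hw ⟨m, hm⟩
  induction r generalizing i j with
  | zero =>
    induction j with
    | zero =>
      refine ⟨1, ?_, ?_⟩
      · intro m
        rw [Equiv.Perm.one_apply]
        simp only [Om, Om0]
        by_cases h : m < n
        · rw [dif_pos h]
          split_ifs with h1 h2 h3
          · exact hVV m h
          · omega
          · rw [← hVV m h]; congr 1; omega
          · omega
        · rw [dif_neg h, if_neg (by omega), if_neg (by omega), if_neg (by omega)]
          unfold HH
          split_ifs with h4
          · have : (⟨i+1, h4.1⟩ : Fin (n+1)) = Fin.last n := by ext; simp; omega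
            rw [this]; exact hs _
          · rfl
      · intro p q hpq
        have : cnt d p q i 0 = 0 := by
          unfold cnt
          rw [Finset.Ico_eq_empty (by omega)]; simp
        rw [this]
        simp
        exact hpq.le
    | succ j ih => exact Inv_step d hv i j (by omega) (by omega) (ih (by omega))
  | succ r ihr =>
    induction j with
    | zero =>
      obtain ⟨π, h1, h2⟩ := ihr (i+1) n (by omega) le_rfl
      refine ⟨π, ?_, ?_⟩
      · intro m
        rw [← h1]
        simp only [Om]
        by_cases c1 : m < i
        · rw [if_pos c1, if_pos (by omega)]
        by_cases c2 : m = i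
        · rw [if_neg c1, if_neg (by omega), if_pos (by omega), if_pos (by omega), c2]
        rw [if_neg c1, if_neg (by omega), if_neg (by omega), if_neg (by omega)]
        by_cases c3 : m < i + 1 + n
        · rw [if_pos c3]; congr 1
        rw [if_neg c3]
        have z1 : HH d (i+1) (m - i - 1) = none := by
          unfold HH; rw [dif_neg]; omega
        have z2 : VV d (i+1) n = none := by
          unfold VV; split_ifs with h
          · exact he _
          · rfl
        rw [z1, z2]
        by_cases c4 : m = i + 1 + n
        · rw [if_pos c4]
        · rw [if_neg c4]
          unfold HH
          rw [dif_neg]; omega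
      · intro p q hpq
        rw [h2 p q hpq]
        have : cnt d p q (i+1) n = cnt d p q i 0 := by
          unfold cnt
          rw [Finset.sum_eq_sum_Ico_succ_bot (show i + 1 < n by omega)]
          simp [add_comm]
        rw [this]
    | succ j ih => exact Inv_step d hv i j (by omega) (by omega) (ih (by omega))

lemma valid_of_weak (d : Pipes n) (hv : WeakValid d) (hw : ∀ i : Fin n, d.1 i 0 = some i)
    (he : ∀ i : Fin n, d.1 i (Fin.last n) = none) (hs : ∀ j : Fin n, d.2 (Fin.last n) j = none) :
    IsValid d := by
  intro i j
  refine ⟨hv i j, fun hWS => ?_⟩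
  obtain ⟨π, h1, -⟩ := Inv_all d hv hw he hs (n - 1 - i) i j (by omega) (by omega)
  have hW : Om d i j (i+j) = We d i j := by
    simp [Om, VV, We, Nat.lt_succ_of_lt j.2]
    rfl
  have hS : Om d i j (i+j+1) = So d i j := by
    have : ¬ ((i:ℕ) + j + 1 < i) := by omega
    have h3 : (i:ℕ) + j + 1 - i - 1 = j := by omega
    simp [Om, HH, this, h3, So]
    rfl
  rcases hx : We d i j with _ | a
  · rfl
  · rw [← hWS, hx, h1, Om0_eq_some] at hS
    rw [hx, h1, Om0_eq_some] at hW
    have := π.injective (hW.trans hS.symm)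
    omega

lemma odd_crossCount (w : Equiv.Perm (Fin n)) (d : Pipes n) (hd : IsGPDof w d) (p q : Fin n)
    (hpq : p < q) : w q < w p ↔ Odd (crossCount d p q) := by
  obtain ⟨hv, hw, he, hs, ht⟩ := hd
  have hn : 0 < n := by have := p.2; omega
  obtain ⟨π, h1, h2⟩ := Inv_all d (fun i j => (hv i j).1) hw he hs (n - 1) 0 n (by omega) le_rfl
  have hc : cnt d p q 0 n = crossCount d p q := by
    unfold cnt crossCount
    rw [Finset.card_filter, Fintype.sum_prod_type]
    rw [add_comm, zero_add, ← Finset.sum_eq_sum_Ico_succ_bot (f := fun a => ∑ b ∈ Finset.range n, chi d p q a b) hn]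
    rw [← Finset.range_eq_Ico, Finset.sum_range]
    refine Finset.sum_congr rfl fun i _ => ?_
    rw [Finset.sum_range]
    refine Finset.sum_congr rfl fun j _ => ?_
    simp [chi]
  rw [← hc, ← h2 p q hpq]
  have key : ∀ a : Fin n, π.symm a = w a := by
    intro a
    rw [Equiv.symm_apply_eq]
    have h3 := h1 (w a)
    have h4 : Om d 0 n (w a) = some a := by
      simp [Om, HH]
      have := ht (w a)
      simpa using this
    rw [h4] at h3
    exact (Om0_eq_some.1 h3.symm).symm
  rw [key, key]; rfl

/-! ### Counting blanks and coefficients -/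

noncomputable def occ {α : Type*} (o : Option α) : ℤ := if o = none then 0 else 1

lemma occ_none {α : Type*} : occ (none : Option α) = 0 := by simp [occ]

lemma occ_some {α : Type*} (a : α) : occ (some a) = 1 := by simp [occ]

lemma occ_tile (d : Pipes n) (hv : WeakValid d) (i j : Fin n) :
    occ (Ea d i j) + occ (No d i j) = occ (We d i j) + occ (So d i j) := by
  rcases hv i j with h | h <;> simp only [Prod.mk.injEq] at h <;> rw [h.1, h.2]
  ring

lemma sum_Hrow (w : Equiv.Perm (Fin n)) (d : Pipes n) (hd : IsGPDof w d) (i : Fin n) :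
    ∑ j, occ (No d i j) = ∑ j, occ (So d i j) + 1 := by
  obtain ⟨hv, hw, he, hs, ht⟩ := hd
  have h : ∑ j, (occ (Ea d i j) + occ (No d i j)) = ∑ j, (occ (We d i j) + occ (So d i j)) :=
    Finset.sum_congr rfl fun j _ => occ_tile d (fun i j => (hv i j).1) i j
  rw [Finset.sum_add_distrib, Finset.sum_add_distrib] at h
  have h1 := Fin.sum_univ_succ (fun j => occ (d.1 i j))
  have h2 := Fin.sum_univ_castSucc (fun j => occ (d.1 i j))
  rw [h1] at h2
  rw [hw, he, occ_some, occ_none] at h2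
  simp only [Ea, We] at h
  linarith

lemma sum_Vcol (w : Equiv.Perm (Fin n)) (d : Pipes n) (hd : IsGPDof w d) (j : Fin n) :
    ∑ i, occ (We d i j) = ∑ i, occ (Ea d i j) + 1 := by
  obtain ⟨hv, hw, he, hs, ht⟩ := hd
  have h : ∑ i, (occ (Ea d i j) + occ (No d i j)) = ∑ i, (occ (We d i j) + occ (So d i j)) :=
    Finset.sum_congr rfl fun i _ => occ_tile d (fun i j => (hv i j).1) i j
  rw [Finset.sum_add_distrib, Finset.sum_add_distrib] at h
  have h1 := Fin.sum_univ_succ (fun i => occ (d.2 i j))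
  have h2 := Fin.sum_univ_castSucc (fun i => occ (d.2 i j))
  rw [h1] at h2
  rw [hs, ht, occ_some, occ_none] at h2
  simp only [No, So] at h
  linarith

lemma dec_seq {n : ℕ} (f : Fin (n+1) → ℤ) (hl : f (Fin.last n) = 0)
    (h : ∀ i : Fin n, f i.castSucc = f i.succ + 1) (i : Fin (n+1)) : f i = n - (i : ℕ) := by
  induction i using Fin.reverseInduction with
  | last => simp [hl]
  | cast i ih => rw [h, ih]; simp; ring

lemma occ_total (w : Equiv.Perm (Fin n)) (d : Pipes n) (hd : IsGPDof w d) :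
    ∑ i, ∑ j, (occ (We d i j) + occ (So d i j) - 1) = 0 := by
  have hH := dec_seq (fun i => ∑ j, occ (d.2 i j))
    (by obtain ⟨hv, hw, he, hs, ht⟩ := hd; simp [hs, occ]) (fun i => sum_Hrow w d hd i)
  have hV := dec_seq (fun j => ∑ i, occ (d.1 i j))
    (by obtain ⟨hv, hw, he, hs, ht⟩ := hd; simp [he, occ]) (fun j => sum_Vcol w d hd j)
  have e1 : ∑ i, ∑ j, occ (We d i j) = ∑ j : Fin n, ((n:ℤ) - (j:ℕ)) := by
    rw [Finset.sum_comm]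
    exact Finset.sum_congr rfl fun j _ => by simpa [We] using hV j.castSucc
  have e2 : ∑ i, ∑ j, occ (So d i j) = ∑ i : Fin n, ((n:ℤ) - ((i:ℕ) + 1)) :=
    Finset.sum_congr rfl fun i _ => by simpa [So] using hH i.succ
  simp only [Finset.sum_sub_distrib, Finset.sum_add_distrib]
  have e3 : ∑ i : Fin n, ((n:ℤ) - ((i:ℕ) + 1)) = ∑ i : Fin n, ((i:ℕ):ℤ) := by
    rw [← Equiv.sum_comp Fin.revPerm]
    refine Finset.sum_congr rfl fun i _ => ?_
    have := i.2
    simp only [Fin.revPerm_apply, Fin.val_rev]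
    omega
  rw [e1, e2, e3, Finset.sum_sub_distrib]
  simp

lemma blank_count (w : Equiv.Perm (Fin n)) (d : Pipes n) (hd : IsGPDof w d) :
    tileCount d .blank = tileCount d .cross + tileCount d .bump := by
  have h := occ_total w d hd
  have key : ∀ i j, occ (We d i j) + occ (So d i j) - 1 =
      (if tile d i j = .cross then 1 else 0) + (if tile d i j = .bump then 1 else 0)
        - (if tile d i j = .blank then (1:ℤ) else 0) := by
    intro i j
    unfold tile occ
    rcases hW : We d i j with _ | a <;> rcases hS : So d i j with _ | b <;> simp <;>
      split_ifs <;> simp_all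
  simp only [key, Finset.sum_sub_distrib, Finset.sum_add_distrib] at h
  simp only [tileCount, Finset.card_filter, Fintype.sum_prod_type]
  zify
  linarith

lemma cross_total (d : Pipes n) (hv : IsValid d) :
    tileCount d .cross = ∑ p ∈ Finset.univ.filter (fun p : Fin n × Fin n => p.1 < p.2),
      crossCount d p.1 p.2 := by
  simp only [tileCount, crossCount, Finset.card_filter]
  rw [Finset.sum_comm]
  refine Finset.sum_congr rfl fun ij _ => ?_
  obtain ⟨i, j⟩ := ij
  simp only
  by_cases ht : tile d i j = .cross
  · rw [if_pos ht]
    have : ∃ a b, We d i j = some a ∧ So d i j = some b ∧ a ≠ b := by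
      have h2 := (hv i j).2
      unfold tile at ht
      rcases hW : We d i j with _ | a <;> rcases hS : So d i j with _ | b <;> rw [hW, hS] at ht h2 <;>
        simp only at ht
      · cases ht
      · split_ifs at ht
      · split_ifs at ht
      · refine ⟨a, b, rfl, rfl, ?_⟩
        rintro rfl; simp at h2
    obtain ⟨a, b, ha, hb, hab⟩ := this
    rw [Finset.sum_eq_single (min a b, max a b)]
    · rw [if_pos]
      refine ⟨ht, ?_⟩
      rw [ha, hb]
      rcases le_total a b with h | h <;> simp [h]
    · rintro ⟨p, q⟩ hp hne
      rw [if_neg]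
      rintro ⟨-, h⟩
      rw [ha, hb] at h
      simp at hp h
      apply hne
      rcases h with ⟨rfl, rfl⟩ | ⟨rfl, rfl⟩
      · simp [hp.le]
      · simp [hp.le]
    · intro h
      exfalso; apply h
      simp
      exact fun h => hab h.symm
  · rw [if_neg ht]
    symm
    apply Finset.sum_eq_zero
    intro p _
    rw [if_neg]
    exact fun h => ht h.1

lemma crossCount_symm (d : Pipes n) (p q : Fin n) : crossCount d p q = crossCount d q p := by
  unfold crossCount CrossesAt
  congr 1; ext ij; simp only [Finset.mem_filter, Finset.mem_univ, true_and]; tauto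

lemma crossCount_self (d : Pipes n) (hv : IsValid d) (p : Fin n) : crossCount d p p = 0 := by
  unfold crossCount
  rw [Finset.card_eq_zero, Finset.filter_eq_empty_iff]
  rintro ij -
  rintro ⟨-, h⟩
  have h2 := (hv ij.1 ij.2).2
  rcases h with ⟨h3, h4⟩ | ⟨h3, h4⟩ <;> rw [h3, h4] at h2 <;> simp at h2

lemma inv_as_sum (w : Equiv.Perm (Fin n)) : invCount w =
    ∑ p ∈ Finset.univ.filter (fun p : Fin n × Fin n => p.1 < p.2),
      (if w p.2 < w p.1 then 1 else 0) := by
  unfold invCount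
  rw [← Finset.card_filter, Finset.filter_filter]

lemma inv_le_blank (w : Equiv.Perm (Fin n)) (d : Pipes n) (hd : IsGPDof w d) :
    invCount w ≤ tileCount d .blank := by
  rw [blank_count w d hd, cross_total d hd.1, inv_as_sum]
  refine le_trans (Finset.sum_le_sum fun p hp => ?_) (Nat.le_add_right _ _)
  have hp' : p.1 < p.2 := by simpa using hp
  have := odd_crossCount w d hd p.1 p.2 hp'
  split_ifs with h
  · exact (this.1 h).pos
  · simp

lemma inv_eq_blank_iff (w : Equiv.Perm (Fin n)) (d : Pipes n) (hd : IsGPDof w d) :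
    tileCount d .blank = invCount w ↔ IsBumplessReduced d := by
  have hpt : ∀ p ∈ Finset.univ.filter (fun p : Fin n × Fin n => p.1 < p.2),
      (if w p.2 < w p.1 then 1 else 0) ≤ crossCount d p.1 p.2 := by
    intro p hp
    have hp' : p.1 < p.2 := by simpa using hp
    have := odd_crossCount w d hd p.1 p.2 hp'
    split_ifs with h
    · exact (this.1 h).pos
    · simp
  rw [blank_count w d hd]
  constructor
  · intro h
    have hle := Finset.sum_le_sum hpt
    rw [← cross_total d hd.1, ← inv_as_sum] at hle
    have hb : tileCount d .bump = 0 := by omega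
    have hc : tileCount d .cross = invCount w := by omega
    refine ⟨?_, ?_⟩
    · unfold tileCount at hb
      rw [Finset.card_eq_zero, Finset.filter_eq_empty_iff] at hb
      exact fun i j => hb (Finset.mem_univ (i, j))
    · rw [cross_total d hd.1, inv_as_sum] at hc
      have h3 := (Finset.sum_eq_sum_iff_of_le hpt).1 hc.symm
      have lt : ∀ p q : Fin n, p < q → crossCount d p q ≤ 1 := by
        intro p q hpq
        rw [← h3 (p, q) (by simpa using hpq)]
        split_ifs <;> simp
      intro p q
      rcases lt_trichotomy p q with h | h | h
      · exact lt p q h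
      · subst h; simp [crossCount_self d hd.1]
      · rw [crossCount_symm]; exact lt q p h
  · rintro ⟨h1, h2⟩
    have hb : tileCount d .bump = 0 := by
      unfold tileCount
      rw [Finset.card_eq_zero, Finset.filter_eq_empty_iff]
      exact fun ij _ => h1 ij.1 ij.2
    rw [hb, add_zero, cross_total d hd.1, inv_as_sum]
    refine Finset.sum_congr rfl fun p hp => ?_
    have hp' : p.1 < p.2 := by simpa using hp
    have := odd_crossCount w d hd p.1 p.2 hp'
    have h3 := h2 p.1 p.2
    split_ifs with h
    · have := (this.1 h).pos; omega
    · rw [this] at h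
      by_contra h4
      apply h
      have : crossCount d p.1 p.2 = 1 := by omega
      rw [this]; exact odd_one

noncomputable def blankProd (d : Pipes n) : MvPolynomial (XYB n) ℤ :=
  ∏ p ∈ Finset.univ.filter (fun p : Fin n × Fin n => tile d p.1 p.2 = .blank),
          (MvPolynomial.X XYB.B - MvPolynomial.X (XYB.x p.1) + MvPolynomial.X (XYB.y p.2))

noncomputable def twt (t : Tile) (i j : Fin n) : Polynomial (MvPolynomial (XYB n) ℤ) :=
  match t with
    | .cross | .horiz | .vert =>
        Polynomial.X + Polynomial.C (MvPolynomial.X (XYB.x i) - MvPolynomial.X (XYB.y j))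
    | .blank =>
        Polynomial.C (MvPolynomial.X XYB.B - MvPolynomial.X (XYB.x i) + MvPolynomial.X (XYB.y j))
    | _ => Polynomial.X + Polynomial.C (MvPolynomial.X XYB.B)

lemma wtA_eq (d : Pipes n) : wtA d = ∏ p : Fin n × Fin n, twt (tile d p.1 p.2) p.1 p.2 := by
  rw [Fintype.prod_prod_type]; rfl

lemma twt_nonblank (t : Tile) (ht : t ≠ .blank) (i j : Fin n) :
    (twt t i j).natDegree ≤ 1 ∧ (twt t i j).coeff 1 = 1 := by
  cases t <;> first | exact absurd rfl ht | (simp only [twt]; constructor <;>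
    first | (simp only [Polynomial.natDegree_X_add_C]; exact le_rfl) | simp)

lemma wtA_split (d : Pipes n) : ∃ P : Polynomial (MvPolynomial (XYB n) ℤ),
    wtA d = Polynomial.C (blankProd d) * P ∧ P.natDegree ≤ n^2 - tileCount d .blank ∧
      P.coeff (n^2 - tileCount d .blank) = 1 := by
  have hcard : (Finset.univ.filter (fun p : Fin n × Fin n => ¬ tile d p.1 p.2 = .blank)).card
      = n^2 - tileCount d .blank := by
    have := Finset.card_filter_add_card_filter_not (s := (Finset.univ : Finset (Fin n × Fin n)))
      (fun p : Fin n × Fin n => tile d p.1 p.2 = .blank)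
    unfold tileCount
    simp at this
    rw [sq]; omega
  refine ⟨∏ p ∈ Finset.univ.filter (fun p : Fin n × Fin n => ¬ tile d p.1 p.2 = .blank),
    twt (tile d p.1 p.2) p.1 p.2, ?_, ?_, ?_⟩
  · rw [wtA_eq, ← Finset.prod_filter_mul_prod_filter_not Finset.univ
      (fun p : Fin n × Fin n => tile d p.1 p.2 = .blank)]
    congr 1
    rw [blankProd, map_prod]
    refine Finset.prod_congr rfl fun p hp => ?_
    simp only [Finset.mem_filter, Finset.mem_univ, true_and] at hp
    rw [hp]; rfl
  · refine (Polynomial.natDegree_prod_le _ _).trans ?_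
    rw [← hcard]
    refine (Finset.sum_le_card_nsmul _ _ 1 ?_).trans (by simp)
    intro p hp
    exact (twt_nonblank _ (by simpa using hp) _ _).1
  · have := Polynomial.coeff_prod_of_natDegree_le
      (s := Finset.univ.filter (fun p : Fin n × Fin n => ¬ tile d p.1 p.2 = .blank))
      (fun p => twt (tile d p.1 p.2) p.1 p.2) 1
      (fun p hp => (twt_nonblank _ (by simpa using hp) _ _).1)
    rw [mul_one, hcard] at this
    rw [this]
    exact Finset.prod_eq_one fun p hp => (twt_nonblank _ (by simpa using hp) _ _).2

noncomputable def ZZ (w : Equiv.Perm (Fin n)) : MvPolynomial (XYB n) ℤ :=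
  ∑ d ∈ Finset.univ.filter (fun d : Pipes n => IsGPDof w d ∧ IsBumplessReduced d), blankProd d

lemma invCount_le_sq (w : Equiv.Perm (Fin n)) : invCount w ≤ n^2 := by
  unfold invCount
  refine (Finset.card_filter_le _ _).trans ?_
  simp [sq]

lemma blank_le_sq (d : Pipes n) : tileCount d .blank ≤ n^2 := by
  unfold tileCount
  refine (Finset.card_filter_le _ _).trans ?_
  simp [sq]

lemma GA_natDegree (w : Equiv.Perm (Fin n)) : (GA w).natDegree ≤ n^2 - invCount w := by
  unfold GA
  refine Polynomial.natDegree_sum_le_of_forall_le _ _ fun d hd => ?_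
  have hd : IsGPDof w d := by simpa using hd
  obtain ⟨P, h1, h2, -⟩ := wtA_split d
  rw [h1]
  refine (Polynomial.natDegree_C_mul_le _ _).trans (h2.trans ?_)
  have := inv_le_blank w d hd
  omega

lemma GA_coeff (w : Equiv.Perm (Fin n)) : (GA w).coeff (n^2 - invCount w) = ZZ w := by
  unfold GA ZZ
  rw [Polynomial.finsetSum_coeff, ← Finset.filter_filter, Finset.sum_filter (p := IsBumplessReduced)]
  refine Finset.sum_congr rfl fun d hd => ?_
  have hd : IsGPDof w d := by simpa using hd
  obtain ⟨P, h1, h2, h3⟩ := wtA_split d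
  have hle := inv_le_blank w d hd
  have hb := blank_le_sq d
  rw [h1, Polynomial.coeff_C_mul]
  split_ifs with h
  · rw [← inv_eq_blank_iff w d hd] at h
    rw [← h, h3, mul_one]
  · rw [← inv_eq_blank_iff w d hd] at h
    rw [Polynomial.coeff_eq_zero_of_natDegree_lt, mul_zero]
    omega

/-! ### Yang–Baxter -/

section YB
variable {K : Type*} [CommRing K] {α : Type*} [Fintype α]

noncomputable def tw (A B x y : K) (a b e t : Option α) : K :=
  if a = none ∧ b = none then (if e = none ∧ t = none then B - x + y else 0)
  else (if e = a ∧ t = b then A + x - y else 0) + (if e = b ∧ t = a then A + B else 0)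

/-- tile operator -/
noncomputable def TO (A B x y : K) (f : Option α → Option α → K) (a b : Option α) : K :=
  if a = none ∧ b = none then (B - x + y) * f none none
  else (A + x - y) * f a b + (A + B) * f b a

lemma sum_ind (f : Option α → Option α → K) (a b : Option α) (v : K) :
    ∑ e, ∑ t, (if e = a ∧ t = b then v else 0) * f e t = v * f a b := by
  rw [Finset.sum_eq_single a, Finset.sum_eq_single b]
  · simp
  · intro t _ h; simp [h]
  · simp
  · intro e _ h; simp [h]
  · simp

lemma sum_tw (A B x y : K) (f : Option α → Option α → K) (a b : Option α) :
    ∑ e, ∑ t, tw A B x y a b e t * f e t = TO A B x y f a b := by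
  unfold tw TO
  split_ifs with h
  · exact sum_ind f none none _
  · simp only [add_mul, Finset.sum_add_distrib]
    rw [sum_ind, sum_ind]; ring

lemma ybe (A B x1 x2 y : K) (H H' : Option α → Option α → Option α → K)
    (h0 : ∀ t, (A + B + (x1 - x2)) * H none none t = (A + B + (x1 - x2)) * H' none none t)
    (h1 : ∀ p q t, (p ≠ none ∨ q ≠ none) →
      (A + B) * H p q t - (x1 - x2) * H q p t = (A + B + (x1 - x2)) * H' p q t)
    (a b s : Option α) :
    if a = none ∧ b = none then
      (A + B + (x1 - x2)) *
        TO A B x2 y (fun e' g => TO A B x1 y (fun e t => H e e' t) a g) b s =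
      (A + B + (x1 - x2)) *
        TO A B x1 y (fun e' g => TO A B x2 y (fun e t => H' e e' t) a g) b s
    else
      (A + B) * TO A B x2 y (fun e' g => TO A B x1 y (fun e t => H e e' t) a g) b s
        - (x1 - x2) * TO A B x2 y (fun e' g => TO A B x1 y (fun e t => H e e' t) b g) a s =
      (A + B + (x1 - x2)) *
        TO A B x1 y (fun e' g => TO A B x2 y (fun e t => H' e e' t) a g) b s := by
  rcases a with _ | a <;> rcases b with _ | b <;> rcases s with _ | s <;> simp [TO]
  · linear_combination (B - x1 + y) * (B - x2 + y) * h0 none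
  · linear_combination (A + x1 - y) * (A + x2 - y) * h0 (some s)
      + (A + x1 - y) * (A + B) * h1 (some s) none none (by simp)
      + (A + B) * (B - x2 + y) * h1 none (some s) none (by simp)
  · linear_combination (A + x1 - y) * (B - x2 + y) * h1 none (some b) none (by simp)
      + (A + B) * (A + x2 - y) * h0 (some b)
      + (A + B) * (A + B) * h1 (some b) none none (by simp)
  · linear_combination (A + x1 - y) * (A + x2 - y) * h1 none (some b) (some s) (by simp)
      + (A + x1 - y) * (A + B) * h1 (some s) (some b) none (by simp)
      + (A + B) * (A + x2 - y) * h1 none (some s) (some b) (by simp)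
      + (A + B) * (A + B) * h1 (some b) (some s) none (by simp)
  · linear_combination (B - x1 + y) * (A + x2 - y) * h1 (some a) none none (by simp)
      + (B - x1 + y) * (A + B) * h0 (some a)
  · linear_combination (A + x1 - y) * (A + x2 - y) * h1 (some a) none (some s) (by simp)
      + (A + x1 - y) * (A + B) * h1 (some s) none (some a) (by simp)
      + (A + B) * (A + x2 - y) * h1 (some a) (some s) none (by simp)
      + (A + B) * (A + B) * h1 none (some s) (some a) (by simp)
  · linear_combination (A + x1 - y) * (A + x2 - y) * h1 (some a) (some b) none (by simp)
      + (A + x1 - y) * (A + B) * h1 none (some b) (some a) (by simp)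
      + (A + B) * (A + x2 - y) * h1 (some a) none (some b) (by simp)
      + (A + B) * (A + B) * h1 (some b) none (some a) (by simp)
  · linear_combination (A + x1 - y) * (A + x2 - y) * h1 (some a) (some b) (some s) (by simp)
      + (A + x1 - y) * (A + B) * h1 (some s) (some b) (some a) (by simp)
      + (A + B) * (A + x2 - y) * h1 (some a) (some s) (some b) (by simp)
      + (A + B) * (A + B) * h1 (some b) (some s) (some a) (by simp)

/-- one row -/
noncomputable def Row (A B x : K) {m : ℕ} (y : Fin m → K) (a : Option α)
    (t s : Fin m → Option α) : K :=
  ∑ e : Fin (m+1) → Option α, if e 0 = a ∧ e (Fin.last m) = none then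
    ∏ j, tw A B x (y j) (e j.castSucc) (s j) (e j.succ) (t j) else 0

lemma Row_zero (A B x : K) (y : Fin 0 → K) (a : Option α) (t s : Fin 0 → Option α) :
    Row A B x y a t s = if a = none then 1 else 0 := by
  unfold Row
  rw [← (Equiv.funUnique (Fin 1) (Option α)).symm.sum_comp]
  simp only [Equiv.funUnique_symm_apply, uniqueElim_const, Finset.univ_eq_empty, Finset.prod_empty]
  split_ifs with h
  · subst h; simp
  · apply Finset.sum_eq_zero; rintro e -; rw [if_neg]; rintro ⟨h1, h2⟩; exact h (h1.symm.trans h2)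

lemma Row_succ (A B x : K) {m : ℕ} (y : Fin (m+1) → K) (a : Option α)
    (t s : Fin (m+1) → Option α) :
    Row A B x y a t s = ∑ e, tw A B x (y 0) a (s 0) e (t 0) *
      Row A B x (Fin.tail y) e (Fin.tail t) (Fin.tail s) := by
  unfold Row
  rw [← (Fin.consEquiv (fun _ : Fin (m+2) => Option α)).sum_comp, Fintype.sum_prod_type]
  rw [Finset.sum_eq_single a]
  · simp only [Finset.mul_sum]
    rw [Finset.sum_comm]
    refine Finset.sum_congr rfl fun e _ => ?_
    rw [Finset.sum_eq_single (e 0)]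
    · simp only [Fin.consEquiv_apply, Fin.cons_zero, true_and, ← Fin.succ_last, Fin.cons_succ]
      split_ifs with h
      · rw [Fin.prod_univ_succ]
        simp only [Fin.castSucc_zero, Fin.cons_zero, Fin.cons_succ, ← Fin.succ_castSucc, Fin.tail]
      · simp
    · intro b _ hb
      rw [if_neg (fun h => hb h.1.symm), mul_zero]
    · simp
  · intro b _ hb
    apply Finset.sum_eq_zero
    intro e _
    rw [if_neg]
    simp [hb]
  · simp

noncomputable def Two (A B x1 x2 : K) {m : ℕ} (y : Fin m → K) (a b : Option α)
    (t s : Fin m → Option α) : K :=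
  ∑ g : Fin m → Option α, Row A B x1 y a t g * Row A B x2 y b g s

lemma Two_zero (A B x1 x2 : K) (y : Fin 0 → K) (a b : Option α) (t s : Fin 0 → Option α) :
    Two A B x1 x2 y a b t s = if a = none ∧ b = none then 1 else 0 := by
  unfold Two
  simp only [Row_zero]
  rw [Fintype.sum_unique]
  split_ifs <;> simp_all

lemma Two_succ (A B x1 x2 : K) {m : ℕ} (y : Fin (m+1) → K) (a b : Option α)
    (t s : Fin (m+1) → Option α) :
    Two A B x1 x2 y a b t s = TO A B x2 (y 0) (fun e' g => TO A B x1 (y 0)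
      (fun e t' => (if t' = t 0 then 1 else 0) *
        Two A B x1 x2 (Fin.tail y) e e' (Fin.tail t) (Fin.tail s)) a g) b (s 0) := by
  simp only [← sum_tw]
  conv_lhs => unfold Two
  rw [← (Fin.consEquiv (fun _ : Fin (m+1) => Option α)).sum_comp, Fintype.sum_prod_type,
    Finset.sum_comm' (t' := Finset.univ) (s' := fun _ => Finset.univ) (by simp)]
  simp only [Row_succ, Fin.consEquiv_apply, Fin.cons_zero]
  rw [Finset.sum_comm]
  conv_rhs => rw [Finset.sum_comm]
  refine Finset.sum_congr rfl fun g _ => ?_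
  simp only [Two, Finset.mul_sum, Finset.sum_mul]
  rw [Finset.sum_comm]
  refine Finset.sum_congr rfl fun e' _ => ?_
  rw [Finset.sum_comm]
  refine Finset.sum_congr rfl fun e _ => ?_
  rw [Finset.sum_eq_single (t 0)]
  · simp only [if_true]
    refine Finset.sum_congr rfl fun g' _ => ?_
    have ht : Fin.tail ((Fin.consEquiv fun _ : Fin (m+1) => Option α) (g, g')) = g' :=
      Fin.tail_cons (α := fun _ => Option α) g g'
    rw [ht]
    ring
  · intro b _ hb
    simp [hb]
  · simp

lemma Two_rel (A B x1 x2 : K) {m : ℕ} (y : Fin m → K) (a b : Option α)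
    (t s : Fin m → Option α) :
    if a = none ∧ b = none then
      (A + B + (x1 - x2)) * Two A B x1 x2 y a b t s
        = (A + B + (x1 - x2)) * Two A B x2 x1 y a b t s
    else (A + B) * Two A B x1 x2 y a b t s - (x1 - x2) * Two A B x1 x2 y b a t s
        = (A + B + (x1 - x2)) * Two A B x2 x1 y a b t s := by
  induction m generalizing a b with
  | zero =>
    simp only [Two_zero]
    split_ifs <;> simp_all
  | succ m ih =>
    simp only [Two_succ]
    refine ybe A B x1 x2 (y 0) _ _ ?_ ?_ a b (s 0)
    · intro t'
      have := ih (Fin.tail y) none none (Fin.tail t) (Fin.tail s)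
      simp only [and_self, if_true] at this
      linear_combination (if t' = t 0 then 1 else 0) * this
    · intro p q t' hpq
      have := ih (Fin.tail y) p q (Fin.tail t) (Fin.tail s)
      rw [if_neg (by tauto)] at this
      linear_combination (if t' = t 0 then 1 else 0) * this

end YB

/-! ### Partition function -/
section PFs
variable {K : Type*} [CommRing K]

def Bdry (ρ τ : Fin n → Option (Fin n)) (d : Pipes n) : Prop :=
  (∀ i, d.1 i 0 = ρ i) ∧ (∀ i, d.1 i (Fin.last n) = none) ∧
  (∀ j, d.2 (Fin.last n) j = none) ∧ (∀ j, d.2 0 j = τ j)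

noncomputable def PF (A B : K) (x y : Fin n → K) (ρ τ : Fin n → Option (Fin n)) : K :=
  ∑ d : Pipes n, if Bdry ρ τ d then
    ∏ i, ∏ j, tw A B (x i) (y j) (We d i j) (So d i j) (Ea d i j) (No d i j) else 0

lemma PF_rows (A B : K) (x y : Fin n → K) (ρ τ : Fin n → Option (Fin n)) :
    PF A B x y ρ τ = ∑ h : Fin (n+1) → Fin n → Option (Fin n),
      if h (Fin.last n) = (fun _ => none) ∧ h 0 = τ then
        ∏ i, Row A B (x i) y (ρ i) (h i.castSucc) (h i.succ) else 0 := by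
  unfold PF
  rw [Fintype.sum_prod_type, Finset.sum_comm]
  refine Finset.sum_congr rfl fun h _ => ?_
  split_ifs with hh
  · unfold Row
    rw [Finset.prod_univ_sum, Fintype.piFinset_univ]
    refine Finset.sum_congr rfl fun v _ => ?_
    by_cases hv : ∀ i, v i 0 = ρ i ∧ v i (Fin.last n) = none
    · rw [if_pos]
      · refine Finset.prod_congr rfl fun i _ => ?_
        rw [if_pos (hv i)]; rfl
      · exact ⟨fun i => (hv i).1, fun i => (hv i).2, fun j => congrFun hh.1 j, fun j => congrFun hh.2 j⟩
    · rw [if_neg]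
      · push Not at hv
        obtain ⟨i, hi⟩ := hv
        rw [eq_comm]
        apply Finset.prod_eq_zero (Finset.mem_univ i)
        rw [if_neg]; tauto
      · intro hb
        exact hv fun i => ⟨hb.1 i, hb.2.1 i⟩
  · apply Finset.sum_eq_zero
    intro v _
    rw [if_neg]
    intro hb
    exact hh ⟨funext hb.2.2.1, funext hb.2.2.2⟩

lemma prod_split (k : Fin n) (hk : (k:ℕ) + 1 < n) (f : Fin n → K) :
    ∏ i, f i = (f k * f ⟨k+1, hk⟩) * ∏ i ∈ (Finset.univ.erase k).erase ⟨k+1, hk⟩, f i := by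
  rw [mul_assoc, Finset.mul_prod_erase _ _ (by simp [Fin.ext_iff]), Finset.mul_prod_erase _ _ (by simp)]

noncomputable def RestP (A B : K) (x y : Fin n → K) (ρ : Fin n → Option (Fin n))
    (k : Fin n) (hk : (k:ℕ) + 1 < n)
    (r : {j : Fin (n+1) // j ≠ (⟨k+1, by omega⟩ : Fin (n+1))} → Fin n → Option (Fin n)) : K :=
  ∏ i ∈ (Finset.univ.erase k).erase ⟨k+1, hk⟩,
          (if hi : i ≠ k ∧ i ≠ ⟨k+1, hk⟩ then Row A B (x i) y (ρ i)
            (r ⟨i.castSucc, by have := hi.2; simp [Fin.ext_iff] at this ⊢; omega⟩)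
            (r ⟨i.succ, by have := hi.1; simp [Fin.ext_iff] at this ⊢; omega⟩) else 0)

lemma RestP_congr (A B : K) (x x' y : Fin n → K) (ρ ρ' : Fin n → Option (Fin n))
    (k : Fin n) (hk : (k:ℕ) + 1 < n)
    (r : {j : Fin (n+1) // j ≠ (⟨k+1, by omega⟩ : Fin (n+1))} → Fin n → Option (Fin n))
    (h : ∀ i, i ≠ k → i ≠ ⟨k+1, hk⟩ → x i = x' i ∧ ρ i = ρ' i) :
    RestP A B x y ρ k hk r = RestP A B x' y ρ' k hk r := by
  unfold RestP
  refine Finset.prod_congr rfl fun i _ => ?_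
  split_ifs with hi
  · rw [(h i hi.1 hi.2).1, (h i hi.1 hi.2).2]
  · rfl

lemma PF_two (A B : K) (x y : Fin n → K) (ρ τ : Fin n → Option (Fin n))
    (k : Fin n) (hk : (k:ℕ) + 1 < n) :
    PF A B x y ρ τ = ∑ r : {j : Fin (n+1) // j ≠ (⟨k+1, by omega⟩ : Fin (n+1))} → Fin n → Option (Fin n),
      if r ⟨Fin.last n, by simp [Fin.ext_iff]; omega⟩ = (fun _ => none) ∧
          r ⟨0, by simp [Fin.ext_iff]⟩ = τ then
        Two A B (x k) (x ⟨k+1, hk⟩) y (ρ k) (ρ ⟨k+1, hk⟩)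
          (r ⟨⟨k, by omega⟩, by simp [Fin.ext_iff]⟩) (r ⟨⟨k+2, by omega⟩, by simp [Fin.ext_iff]⟩) *
        RestP A B x y ρ k hk r else 0 := by
  rw [PF_rows, ← (Equiv.funSplitAt (⟨k+1, by omega⟩ : Fin (n+1)) (Fin n → Option (Fin n))).symm.sum_comp,
    Fintype.sum_prod_type, Finset.sum_comm]
  refine Finset.sum_congr rfl fun r _ => ?_
  have e1 : ∀ g, (Equiv.funSplitAt (⟨k+1, by omega⟩ : Fin (n+1)) (Fin n → Option (Fin n))).symm (g, r)
      ⟨k+1, by omega⟩ = g := by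
    intro g; simp [Equiv.funSplitAt]
  have e2 : ∀ g (j : Fin (n+1)) (hj : j ≠ ⟨k+1, by omega⟩),
      (Equiv.funSplitAt (⟨k+1, by omega⟩ : Fin (n+1)) (Fin n → Option (Fin n))).symm (g, r) j = r ⟨j, hj⟩ := by
    intro g j hj; simp [Equiv.funSplitAt, hj]
  simp only [e2 _ (Fin.last n) (by simp [Fin.ext_iff]; omega), e2 _ 0 (by simp [Fin.ext_iff])]
  split_ifs with hh
  · unfold Two
    rw [Finset.sum_mul]
    refine Finset.sum_congr rfl fun g _ => ?_
    rw [prod_split k hk]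
    congr 1
    · have c1 : k.succ = (⟨k+1, by omega⟩ : Fin (n+1)) := rfl
      have c2 : (⟨k+1, hk⟩ : Fin n).castSucc = (⟨k+1, by omega⟩ : Fin (n+1)) := rfl
      rw [c1, c2, e1, e2 _ k.castSucc (by simp [Fin.ext_iff]),
        e2 _ (⟨k+1, hk⟩ : Fin n).succ (by simp [Fin.ext_iff])]
      rfl
    · refine Finset.prod_congr rfl fun i hi => ?_
      have hi' : i ≠ k ∧ i ≠ ⟨k+1, hk⟩ := by
        simp only [Finset.mem_erase] at hi; exact ⟨hi.2.1, hi.1⟩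
      rw [dif_pos hi', e2 _ i.castSucc (by have := hi'.2; simp [Fin.ext_iff] at this ⊢; omega),
        e2 _ i.succ (by have := hi'.1; simp [Fin.ext_iff] at this ⊢; omega)]
  · simp

lemma adj_left (k : Fin n) (hk : (k:ℕ) + 1 < n) : adjSwap k hk k = ⟨k+1, hk⟩ := by
  simp [adjSwap]

lemma adj_right (k : Fin n) (hk : (k:ℕ) + 1 < n) : adjSwap k hk ⟨k+1, hk⟩ = k := by
  simp [adjSwap]

lemma adj_other (k : Fin n) (hk : (k:ℕ) + 1 < n) (i : Fin n) (h1 : i ≠ k) (h2 : i ≠ ⟨k+1, hk⟩) :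
    adjSwap k hk i = i := by
  simp [adjSwap, Equiv.swap_apply_of_ne_of_ne h1 h2]

lemma PF_rel (A B : K) (x y : Fin n → K) (ρ τ : Fin n → Option (Fin n))
    (k : Fin n) (hk : (k:ℕ) + 1 < n) (hρ : ρ k ≠ none) :
    (A + B) * PF A B x y ρ τ - (x k - x ⟨k+1, hk⟩) * PF A B x y (ρ ∘ adjSwap k hk) τ =
      (A + B + (x k - x ⟨k+1, hk⟩)) * PF A B (x ∘ adjSwap k hk) y ρ τ := by
  simp only [PF_two _ _ _ _ _ _ k hk, Finset.mul_sum, ← Finset.sum_sub_distrib]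
  refine Finset.sum_congr rfl fun r _ => ?_
  split_ifs with hh
  · have key := Two_rel A B (x k) (x ⟨k+1, hk⟩) y (ρ k) (ρ ⟨k+1, hk⟩)
      (r ⟨⟨k, by omega⟩, by simp [Fin.ext_iff]⟩) (r ⟨⟨k+2, by omega⟩, by simp [Fin.ext_iff]⟩)
    rw [if_neg (fun h => hρ h.1)] at key
    rw [RestP_congr A B x x y (ρ ∘ adjSwap k hk) ρ k hk r
        (fun i h1 h2 => ⟨rfl, by simp [adj_other k hk i h1 h2]⟩),
      RestP_congr A B (x ∘ adjSwap k hk) x y ρ ρ k hk r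
        (fun i h1 h2 => ⟨by simp [adj_other k hk i h1 h2], rfl⟩)]
    simp only [Function.comp, adj_left, adj_right]
    linear_combination RestP A B x y ρ k hk r * key
  · simp

lemma tw_map {α : Type*} (σ : Equiv.Perm α) (A B x y : K) (a b e t : Option α) :
    tw A B x y (a.map σ) (b.map σ) (e.map σ) (t.map σ) = tw A B x y a b e t := by
  have : ∀ u v : Option α, u.map σ = v.map σ ↔ u = v := fun u v =>
    (Option.map_injective σ.injective).eq_iff
  unfold tw
  simp only [this, Option.map_eq_none_iff]

lemma PF_relabel (A B : K) (x y : Fin n → K) (ρ τ : Fin n → Option (Fin n))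
    (σ : Equiv.Perm (Fin n)) :
    PF A B x y (fun i => (ρ i).map σ) (fun j => (τ j).map σ) = PF A B x y ρ τ := by
  unfold PF
  have hinj : ∀ u v : Option (Fin n), u.map σ = v.map σ ↔ u = v := fun u v =>
    (Option.map_injective σ.injective).eq_iff
  let F : Pipes n ≃ Pipes n := Equiv.prodCongr
    (Equiv.arrowCongr (Equiv.refl _) (Equiv.arrowCongr (Equiv.refl _) (Equiv.optionCongr σ)))
    (Equiv.arrowCongr (Equiv.refl _) (Equiv.arrowCongr (Equiv.refl _) (Equiv.optionCongr σ)))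
  rw [← F.sum_comp]
  refine Finset.sum_congr rfl fun d _ => ?_
  have f1 : ∀ i j, (F d).1 i j = (d.1 i j).map σ := fun i j => rfl
  have f2 : ∀ i j, (F d).2 i j = (d.2 i j).map σ := fun i j => rfl
  simp only [Bdry, We, So, Ea, No, f1, f2, tw_map, hinj, Option.map_eq_none_iff]
  congr

/-- The coefficient-ring specialisation. -/
lemma GA_eq_PF (w : Equiv.Perm (Fin n)) :
    GA w = PF (K := Polynomial (MvPolynomial (XYB n) ℤ)) Polynomial.X
      (Polynomial.C (MvPolynomial.X XYB.B))
      (fun i => Polynomial.C (MvPolynomial.X (XYB.x i)))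
      (fun j => Polynomial.C (MvPolynomial.X (XYB.y j))) (fun i => some i)
      (fun j => some (w.symm j)) := by
  unfold GA PF
  rw [Finset.sum_filter]
  refine Finset.sum_congr rfl fun d _ => ?_
  by_cases hg : IsGPDof w d
  · rw [if_pos hg, if_pos (show Bdry _ _ d from hg.2)]
    unfold wtA
    refine Finset.prod_congr rfl fun i _ => Finset.prod_congr rfl fun j _ => ?_
    change twt (tile d i j) i j = _
    obtain ⟨h1, h2⟩ := hg.1 i j
    unfold tile tw
    rcases hW : We d i j with _ | a <;> rcases hS : So d i j with _ | b <;>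
      rw [hW, hS] at h1 h2 <;> simp only [Prod.mk.injEq] at h1
    · have : Ea d i j = none ∧ No d i j = none := by tauto
      simp [this, twt]
    · rcases h1 with h1 | h1 <;> simp [h1, twt] <;> ring
    · rcases h1 with h1 | h1 <;> simp [h1, twt] <;> ring
    · have hab : a ≠ b := by rintro rfl; simp at h2
      rcases h1 with h1 | h1 <;> simp [h1, twt, hab, hab.symm] <;> ring
  · rw [if_neg hg]
    split_ifs with hb
    · by_contra hne
      apply hg
      refine ⟨valid_of_weak d ?_ hb.1 hb.2.1 hb.2.2.1, hb⟩
      intro i j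
      have h1 : tw (K := Polynomial (MvPolynomial (XYB n) ℤ)) Polynomial.X
          (Polynomial.C (MvPolynomial.X XYB.B)) (Polynomial.C (MvPolynomial.X (XYB.x i)))
          (Polynomial.C (MvPolynomial.X (XYB.y j)))
          (We d i j) (So d i j) (Ea d i j) (No d i j) ≠ 0 := by
        intro h0
        apply hne
        symm
        apply Finset.prod_eq_zero (Finset.mem_univ i)
        exact Finset.prod_eq_zero (Finset.mem_univ j) h0
      by_contra hcon
      apply h1
      simp only [Prod.mk.injEq] at hcon
      unfold tw
      split_ifs <;> first | rfl | (exfalso; apply hcon; tauto) | simp | skip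
      all_goals (exfalso; apply hcon; simp_all)
    · rfl

end PFs

/-! ### Recursion for the leading coefficients -/
section rec5

lemma tw_hom {K L : Type*} [CommRing K] [CommRing L] (φ : K →+* L) {α : Type*}
    (A B x y : K) (a b e t : Option α) :
    φ (tw A B x y a b e t) = tw (φ A) (φ B) (φ x) (φ y) a b e t := by
  unfold tw
  split_ifs <;> simp

lemma PF_hom {K L : Type*} [CommRing K] [CommRing L] (φ : K →+* L)
    (A B : K) (x y : Fin n → K) (ρ τ : Fin n → Option (Fin n)) :
    φ (PF A B x y ρ τ) = PF (φ A) (φ B) (φ ∘ x) (φ ∘ y) ρ τ := by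
  unfold PF
  rw [map_sum]
  refine Finset.sum_congr rfl fun d _ => ?_
  split_ifs
  · simp only [map_prod, tw_hom, Function.comp]
  · simp

def gsw (k : Fin n) (hk : (k:ℕ) + 1 < n) : XYB n → XYB n
  | XYB.x i => XYB.x (adjSwap k hk i)
  | XYB.y j => XYB.y j
  | XYB.B => XYB.B

lemma adj_symm (k : Fin n) (hk : (k:ℕ) + 1 < n) (i : Fin n) :
    (adjSwap k hk).symm i = adjSwap k hk i := by
  simp [adjSwap]

lemma GA_rel (w : Equiv.Perm (Fin n)) (k : Fin n) (hk : (k:ℕ) + 1 < n) :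
    (Polynomial.X + Polynomial.C (MvPolynomial.X XYB.B)) * GA w -
      Polynomial.C (MvPolynomial.X (XYB.x k) - MvPolynomial.X (XYB.x ⟨k+1, hk⟩)) *
        GA (w * adjSwap k hk) =
    (Polynomial.X + Polynomial.C (MvPolynomial.X XYB.B) +
      Polynomial.C (MvPolynomial.X (XYB.x k) - MvPolynomial.X (XYB.x ⟨k+1, hk⟩))) *
      (GA w).map (MvPolynomial.rename (gsw k hk)).toRingHom := by
  have h := PF_rel (K := Polynomial (MvPolynomial (XYB n) ℤ)) Polynomial.X
      (Polynomial.C (MvPolynomial.X XYB.B))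
      (fun i => Polynomial.C (MvPolynomial.X (XYB.x i)))
      (fun j => Polynomial.C (MvPolynomial.X (XYB.y j))) (fun i => some i)
      (fun j => some (w.symm j)) k hk (by simp)
  have h2 : GA (w * adjSwap k hk) = PF (K := Polynomial (MvPolynomial (XYB n) ℤ)) Polynomial.X
      (Polynomial.C (MvPolynomial.X XYB.B))
      (fun i => Polynomial.C (MvPolynomial.X (XYB.x i)))
      (fun j => Polynomial.C (MvPolynomial.X (XYB.y j))) ((fun i => some i) ∘ adjSwap k hk)
      (fun j => some (w.symm j)) := by
    rw [GA_eq_PF, ← PF_relabel _ _ _ _ _ _ (adjSwap k hk)]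
    congr 1
    funext j
    simp only [Option.map_some]
    congr 1
    rw [Equiv.eq_symm_apply]
    have : (w * adjSwap k hk).symm j = adjSwap k hk (w.symm j) := by
      rw [Equiv.symm_apply_eq]
      simp [adjSwap]
    rw [this]
    simp [adjSwap]
  have h3 : (GA w).map (MvPolynomial.rename (gsw k hk)).toRingHom =
      PF (K := Polynomial (MvPolynomial (XYB n) ℤ)) Polynomial.X
      (Polynomial.C (MvPolynomial.X XYB.B))
      ((fun i => Polynomial.C (MvPolynomial.X (XYB.x i))) ∘ adjSwap k hk)
      (fun j => Polynomial.C (MvPolynomial.X (XYB.y j))) (fun i => some i)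
      (fun j => some (w.symm j)) := by
    rw [GA_eq_PF, ← Polynomial.coe_mapRingHom, PF_hom]
    congr 1
    · simp
    · simp [gsw]
    · funext i; simp [gsw]
    · funext i; simp [gsw]
  rw [← GA_eq_PF, ← h2, ← h3] at h
  simp only [map_sub] at h ⊢
  exact h

lemma ZZ_rel (w : Equiv.Perm (Fin n)) (k : Fin n) (hk : (k:ℕ) + 1 < n)
    (hl : invCount (w * adjSwap k hk) + 1 = invCount w) :
    (MvPolynomial.X (XYB.x k) - MvPolynomial.X (XYB.x ⟨k+1, hk⟩)) * ZZ (w * adjSwap k hk) =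
      ZZ w - MvPolynomial.rename (gsw k hk) (ZZ w) := by
  have h := congrArg (fun P => P.coeff (n^2 - invCount w + 1)) (GA_rel w k hk)
  have hsq := invCount_le_sq w
  have e : n^2 - invCount w + 1 = n^2 - invCount (w * adjSwap k hk) := by omega
  have z1 : (GA w).coeff (n^2 - invCount w + 1) = 0 :=
    Polynomial.coeff_eq_zero_of_natDegree_lt (Nat.lt_succ_of_le (GA_natDegree w))
  simp only [Polynomial.coeff_sub, add_mul, Polynomial.coeff_add, Polynomial.coeff_X_mul,
    Polynomial.coeff_C_mul, Polynomial.coeff_map, z1, GA_coeff, mul_zero, map_zero, add_zero] at h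
  rw [e, GA_coeff] at h
  have h' : ZZ w - (MvPolynomial.X (XYB.x k) - MvPolynomial.X (XYB.x ⟨k+1, hk⟩)) *
    ZZ (w * adjSwap k hk) = MvPolynomial.rename (gsw k hk) (ZZ w) := h
  linear_combination -h'

lemma invCount_adj (w : Equiv.Perm (Fin n)) (k : Fin n) (hk : (k:ℕ) + 1 < n)
    (h : w k < w ⟨k+1, hk⟩) : invCount (w * adjSwap k hk) = invCount w + 1 := by
  have hs : ∀ a, adjSwap k hk (adjSwap k hk a) = a := by intro a; simp [adjSwap]
  have key : Finset.univ.filter (fun p : Fin n × Fin n => p.1 < p.2 ∧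
        (w * adjSwap k hk) p.2 < (w * adjSwap k hk) p.1) =
      insert (k, ⟨k+1, hk⟩) ((Finset.univ.filter (fun p : Fin n × Fin n => p.1 < p.2 ∧
        w p.2 < w p.1)).map (Equiv.prodCongr (adjSwap k hk) (adjSwap k hk)).toEmbedding) := by
    ext ⟨a, b⟩
    rw [Finset.mem_insert, Finset.mem_map_equiv, Finset.mem_filter, Finset.mem_filter]
    simp only [Finset.mem_univ, true_and, Equiv.Perm.mul_apply,
      Equiv.prodCongr_symm, Equiv.prodCongr_apply, Prod.map, adj_symm, Prod.mk.injEq]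
    by_cases h1 : a = k ∧ b = ⟨k+1, hk⟩
    · simp only [h1.1, h1.2, adj_left, adj_right, h, and_true, true_or, iff_true]
      exact Nat.lt_succ_self _
    by_cases h2 : b = k ∧ a = ⟨k+1, hk⟩
    · simp only [h2.1, h2.2, adj_left, adj_right]
      constructor
      · rintro ⟨h3, -⟩
        simp [Fin.lt_def] at h3
      · rintro (h3 | h3)
        · have := h3.1; simp [Fin.ext_iff] at this
        · exact absurd h3.2 (not_lt.2 h.le)
    · have : adjSwap k hk a < adjSwap k hk b ↔ a < b := by
        simp only [Fin.ext_iff] at h1 h2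
        simp only [adjSwap, Equiv.swap_apply_def, Fin.ext_iff, Fin.lt_def]
        have hv : ((⟨k+1, hk⟩ : Fin n) : ℕ) = k + 1 := rfl
        split_ifs <;> omega
      rw [this]
      simp only [h1, false_or]
  unfold invCount
  rw [key, Finset.card_insert_of_notMem, Finset.card_map]
  rw [Finset.mem_map_equiv]
  simp [adj_symm, adj_left, adj_right]
  intro h3
  simp [Fin.lt_def] at h3

lemma invCount_conj (w : Equiv.Perm (Fin n)) :
    invCount (Fin.revPerm * w * Fin.revPerm) = invCount w := by
  unfold invCount
  refine Finset.card_nbij' (fun p => (p.2.rev, p.1.rev)) (fun p => (p.2.rev, p.1.rev)) ?_ ?_ ?_ ?_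
  · rintro ⟨a, b⟩; simp [Fin.rev_lt_rev]
  · rintro ⟨a, b⟩; simp [Fin.rev_lt_rev]
  · rintro ⟨a, b⟩; simp
  · rintro ⟨a, b⟩; simp

lemma exists_ascent (w : Equiv.Perm (Fin n)) (hw : w ≠ Fin.revPerm) :
    ∃ (k : Fin n) (hk : (k:ℕ) + 1 < n), w k < w ⟨k+1, hk⟩ := by
  by_contra hcon
  push Not at hcon
  apply hw
  rcases n with _ | m
  · ext i; exact i.elim0
  have hmono : StrictMono (fun i => (w i).rev) := by
    rw [Fin.strictMono_iff_lt_succ]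
    intro i
    rw [Fin.rev_lt_rev]
    refine lt_of_le_of_ne (hcon i.castSucc (by simp)) ?_
    intro h
    have := w.injective h
    simp [Fin.ext_iff] at this
  have hbij : Function.Surjective (fun i => (w i).rev) :=
    Fin.rev_surjective.comp w.surjective
  let e : Fin (m+1) ≃o Fin (m+1) := hmono.orderIsoOfSurjective _ hbij
  have he : e = OrderIso.refl _ := Subsingleton.elim _ _
  ext i
  have h1 : e i = i := by rw [he]; rfl
  have h2 : (w i).rev = i := h1
  rw [Fin.revPerm_apply, ← h2, Fin.rev_rev, h2]

end rec5

/-! ### Base case -/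
section base

def d0 (n : ℕ) : Pipes n :=
  (fun i j => if (i:ℕ) + (j:ℕ) < n then some i else none,
   fun i j => if (i:ℕ) + (j:ℕ) < n then some j.rev else none)

lemma d0_We (i j : Fin n) : We (d0 n) i j = if (i:ℕ) + (j:ℕ) < n then some i else none := rfl
lemma d0_Ea (i j : Fin n) : Ea (d0 n) i j = if (i:ℕ) + ((j:ℕ)+1) < n then some i else none := rfl
lemma d0_No (i j : Fin n) : No (d0 n) i j = if (i:ℕ) + (j:ℕ) < n then some j.rev else none := rfl
lemma d0_So (i j : Fin n) : So (d0 n) i j = if (i:ℕ) + 1 + (j:ℕ) < n then some j.rev else none := rfl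

lemma d0_tile (i j : Fin n) : tile (d0 n) i j =
    if (i:ℕ) + j + 1 < n then .cross else if (i:ℕ) + j < n then .nw else .blank := by
  unfold tile
  rw [d0_We, d0_Ea, d0_No, d0_So]
  by_cases h1 : (i:ℕ) + j + 1 < n
  · have a1 : (i:ℕ) + j < n := by omega
    have a2 : (i:ℕ) + (j + 1) < n := by omega
    have a3 : (i:ℕ) + 1 + j < n := by omega
    simp [h1, a1, a2, a3]
  · have a2 : ¬ (i:ℕ) + (j + 1) < n := by omega
    have a3 : ¬ (i:ℕ) + 1 + j < n := by omega
    by_cases a1 : (i:ℕ) + j < n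
    · simp [h1, a1, a2, a3]
    · simp [h1, a1, a2, a3]

lemma d0_gpd : IsGPDof Fin.revPerm (d0 n) := by
  refine ⟨?_, ?_, ?_, ?_, ?_⟩
  · intro i j
    rw [d0_We, d0_Ea, d0_No, d0_So]
    by_cases h1 : (i:ℕ) + j + 1 < n
    · have a1 : (i:ℕ) + j < n := by omega
      have a2 : (i:ℕ) + (j + 1) < n := by omega
      have a3 : (i:ℕ) + 1 + j < n := by omega
      simp only [a1, a2, a3, if_true, true_or, true_and]
      intro h
      simp [Fin.ext_iff] at h
      omega
    · have a2 : ¬ (i:ℕ) + (j + 1) < n := by omega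
      have a3 : ¬ (i:ℕ) + 1 + j < n := by omega
      by_cases a1 : (i:ℕ) + j < n
      · simp [a1, a2, a3, Fin.ext_iff]; omega
      · simp [a1, a2, a3]
  · intro i; simp [d0]
  · intro i; simp [d0]
  · intro i; simp [d0]
  · intro i; simp [d0]

lemma d0_br : IsBumplessReduced (d0 n) := by
  refine ⟨?_, ?_⟩
  · intro i j
    rw [d0_tile]
    split_ifs <;> simp
  · have lem : ∀ p q i j : Fin n, CrossesAt (d0 n) p q i j → i < j.rev ∧
        ((i = p ∧ j.rev = q) ∨ (i = q ∧ j.rev = p)) := by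
      rintro p q i j ⟨h1, h2⟩
      rw [d0_tile] at h1
      have h3 : (i:ℕ) + j + 1 < n := by
        by_contra h; rw [if_neg h] at h1; split_ifs at h1
      have a1 : (i:ℕ) + j < n := by omega
      have a3 : (i:ℕ) + 1 + j < n := by omega
      rw [d0_We, d0_So, if_pos a1, if_pos a3] at h2
      refine ⟨?_, by simpa using h2⟩
      rw [Fin.lt_def, Fin.val_rev]; omega
    intro p q
    unfold crossCount
    rw [Finset.card_le_one]
    rintro ⟨i, j⟩ h ⟨i', j'⟩ h'
    obtain ⟨h1, h2⟩ := lem p q i j (Finset.mem_filter.1 h).2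
    obtain ⟨h1', h2'⟩ := lem p q i' j' (Finset.mem_filter.1 h').2
    have : i = i' ∧ j.rev = j'.rev := by
      simp only [Fin.ext_iff, Fin.lt_def] at *
      omega
    exact Prod.ext this.1 (Fin.rev_injective this.2)

lemma uniq_base (d : Pipes n) (hd : IsGPDof Fin.revPerm d) (hb : ∀ i j, tile d i j ≠ .bump) :
    d = d0 n := by
  obtain ⟨hv, hw, he, hs, ht⟩ := hd
  -- one column
  have col : ∀ j : Fin n, (∀ i, We d i j = We (d0 n) i j) →
      (∀ i, d.2 i j = (d0 n).2 i j) ∧ (∀ i, Ea d i j = Ea (d0 n) i j) := by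
    intro j hW
    -- tile facts
    have up : ∀ i : Fin n, (i:ℕ) + 1 + j ≤ n → No d i j = some j.rev := by
      rintro ⟨i, hi⟩ hij
      induction i with
      | zero => exact ht j
      | succ i ih =>
        simp only at hij
        have hN := ih (by omega) (by simp only; omega)
        have hWi := hW ⟨i, by omega⟩
        rw [d0_We, if_pos (by simp only; omega)] at hWi
        change So d ⟨i, by omega⟩ j = _
        rcases (hv ⟨i, by omega⟩ j).1 with h | h
        · simp only [Prod.mk.injEq] at h
          rw [← h.2, hN]
        · simp only [Prod.mk.injEq] at h
          rw [hN, hWi] at h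
          have := h.2
          simp [Fin.ext_iff] at this
          omega
    have down : ∀ m (i : Fin (n+1)), (i:ℕ) + m = n → n ≤ i + j → d.2 i j = none := by
      intro m
      induction m with
      | zero =>
        intro i hi _
        have : i = Fin.last n := by ext; simpa using hi
        rw [this]; exact hs j
      | succ m ih =>
        intro i hi hij
        have hi' : (i:ℕ) < n := by omega
        have hS : So d ⟨i, hi'⟩ j = none := ih (Fin.succ ⟨i, hi'⟩) (by simp; omega) (by simp; omega)
        have hWi := hW ⟨i, hi'⟩
        rw [d0_We, if_neg (by simp only; omega)] at hWi
        change No d ⟨i, hi'⟩ j = none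
        have h := (hv ⟨i, hi'⟩ j).1
        rw [hS, hWi] at h
        simp only [Prod.mk.injEq] at h
        tauto
    have H : ∀ i, d.2 i j = (d0 n).2 i j := by
      intro i
      by_cases h : (i:ℕ) + j < n
      · have := up ⟨i, by omega⟩ (by simp only; omega)
        simp only [d0, h, if_true]
        exact this
      · simp only [d0, h, if_false]
        exact down (n - i) i (by omega) (by omega)
    refine ⟨H, fun i => ?_⟩
    have hN : No d i j = No (d0 n) i j := H _
    have hS : So d i j = So (d0 n) i j := H _
    have h := (hv i j).1
    rw [hN, hS, hW i] at h
    have hbb := hb i j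
    unfold tile at hbb
    rw [hN, hS, hW i] at hbb
    rw [d0_We, d0_No, d0_So] at h hbb
    rw [d0_Ea]
    by_cases h1 : (i:ℕ) + j + 1 < n
    · have a1 : (i:ℕ) + j < n := by omega
      have a2 : (i:ℕ) + (j + 1) < n := by omega
      have a3 : (i:ℕ) + 1 + j < n := by omega
      simp only [a1, a2, a3, if_true] at hbb ⊢
      by_contra hne
      rw [if_neg hne] at hbb
      exact hbb rfl
    · have a2 : ¬ (i:ℕ) + (j + 1) < n := by omega
      have a3 : ¬ (i:ℕ) + 1 + j < n := by omega
      by_cases a1 : (i:ℕ) + j < n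
      · simp only [a1, a2, a3, if_true, if_false, Prod.mk.injEq] at h ⊢
        rcases h with h | h
        · exact absurd h.2 (by simp)
        · exact h.1
      · simp only [a1, a2, a3, if_false, Prod.mk.injEq] at h ⊢
        tauto
  have V : ∀ j : Fin (n+1), ∀ i, d.1 i j = (d0 n).1 i j := by
    intro j
    induction j using Fin.induction with
    | zero => intro i; rw [hw]; simp [d0]
    | succ j ih => exact (col j ih).2
  refine Prod.ext (funext fun i => funext fun j => V j i) (funext fun i => funext fun j => ?_)
  exact (col j (fun i => V _ i)).1 i

lemma ZZ_base : ZZ (Fin.revPerm : Equiv.Perm (Fin n)) =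
    ∏ p ∈ Finset.univ.filter (fun p : Fin n × Fin n => (p.1 : ℕ) + (p.2 : ℕ) + 2 ≤ n),
      (MvPolynomial.X XYB.B - MvPolynomial.X (XYB.x p.1.rev) + MvPolynomial.X (XYB.y p.2.rev)) := by
  have hset : Finset.univ.filter (fun d : Pipes n => IsGPDof Fin.revPerm d ∧ IsBumplessReduced d)
      = {d0 n} := by
    ext d
    simp only [Finset.mem_filter, Finset.mem_univ, true_and, Finset.mem_singleton]
    constructor
    · rintro ⟨h1, h2⟩; exact uniq_base d h1 h2.1
    · rintro rfl; exact ⟨d0_gpd, d0_br⟩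
  unfold ZZ
  rw [hset, Finset.sum_singleton]
  unfold blankProd
  refine Finset.prod_nbij' (fun p => (p.1.rev, p.2.rev)) (fun p => (p.1.rev, p.2.rev)) ?_ ?_ ?_ ?_ ?_
  · rintro ⟨i, j⟩ h
    simp only [Finset.mem_filter, Finset.mem_univ, true_and, d0_tile, Fin.val_rev] at h ⊢
    split_ifs at h
    omega
  · rintro ⟨i, j⟩ h
    simp only [Finset.mem_filter, Finset.mem_univ, true_and, d0_tile, Fin.val_rev] at h ⊢
    rw [if_neg (by omega), if_neg (by omega)]
  · rintro ⟨i, j⟩ _; simp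
  · rintro ⟨i, j⟩ _; simp
  · rintro ⟨i, j⟩ _; simp

end base

section final

noncomputable def theta (n : ℕ) (z : XY n) : MvPolynomial (XYB n) ℤ :=
  XY.casesOn z (fun i => MvPolynomial.X XYB.B - MvPolynomial.X (XYB.x i.rev))
    (fun j => - MvPolynomial.X (XYB.y j.rev))

/-- The action of `sᵢ` on variables. -/
def sxy (i : Fin n) (hi : (i : ℕ) + 1 < n) (z : XY n) : XY n :=
  XY.casesOn z (fun k => XY.x (adjSwap i hi k)) (fun k => XY.y k)

lemma adj_rev (k : Fin n) (hk : (k:ℕ) + 1 < n) (i : Fin n) (hi : (i:ℕ) + 1 < n)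
    (hik : (i:ℕ) + k + 2 = n) (m : Fin n) :
    (adjSwap i hi m).rev = adjSwap k hk m.rev := by
  have hv : ((⟨k+1, hk⟩ : Fin n) : ℕ) = k + 1 := rfl
  have hv' : ((⟨i+1, hi⟩ : Fin n) : ℕ) = i + 1 := rfl
  simp only [adjSwap, Equiv.swap_apply_def, Fin.ext_iff, Fin.val_rev]
  split_ifs <;> (try simp only [Fin.val_rev]) <;> omega

lemma main_eq {n : ℕ} 
    (S : Equiv.Perm (Fin n) → MvPolynomial (XY n) ℤ)
    (hbase : S Fin.revPerm =
      ∏ p ∈ Finset.univ.filter (fun p : Fin n × Fin n => (p.1 : ℕ) + (p.2 : ℕ) + 2 ≤ n),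
        (MvPolynomial.X (XY.x p.1) - MvPolynomial.X (XY.y p.2)))
    (hrec : ∀ (v : Equiv.Perm (Fin n)) (i : Fin n) (hi : (i : ℕ) + 1 < n),
      invCount (v * adjSwap i hi) < invCount v →
      (MvPolynomial.X (XY.x i) - MvPolynomial.X (XY.x ⟨(i : ℕ) + 1, hi⟩)) *
          S (v * adjSwap i hi) =
        S v - MvPolynomial.rename (sxy i hi) (S v))
    (m : ℕ) (w : Equiv.Perm (Fin n)) (hm : n^2 - invCount w = m) :
    ZZ w = MvPolynomial.aeval (R := ℤ) (S₁ := MvPolynomial (XYB n) ℤ) (theta n)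
        (S (Fin.revPerm * w * Fin.revPerm)) := by
  induction m using Nat.strong_induction_on generalizing w with
  | _ m ih =>
  by_cases hw : w = Fin.revPerm
  · subst hw
    have : (Fin.revPerm * Fin.revPerm * Fin.revPerm : Equiv.Perm (Fin n)) = Fin.revPerm := by
      ext i; simp
    rw [this, hbase, ZZ_base, map_prod]
    refine Finset.prod_congr rfl fun p _ => ?_
    simp [theta]
  · obtain ⟨k, hk, hlt⟩ := exists_ascent w hw
    have hl := invCount_adj w k hk hlt
    set w' := w * adjSwap k hk with hw'
    have hww : w' * adjSwap k hk = w := by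
      rw [hw', mul_assoc]; simp [adjSwap]
    have hsq := invCount_le_sq w'
    have IH := ih (n^2 - invCount w') (by omega) w' rfl
    have hZ := ZZ_rel w' k hk (by rw [hww, hl])
    rw [hww, IH] at hZ
    let i : Fin n := ⟨n - 2 - k, by omega⟩
    have hiv : (i:ℕ) = n - 2 - k := rfl
    have hi : (i:ℕ) + 1 < n := by omega
    have hik : (i:ℕ) + k + 2 = n := by omega
    have hv : (Fin.revPerm * w' * Fin.revPerm) * adjSwap i hi = Fin.revPerm * w * Fin.revPerm := by
      ext x
      rw [← hww]
      simp [adj_rev k hk i hi hik]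
    have hR := hrec (Fin.revPerm * w' * Fin.revPerm) i hi
      (by rw [hv, invCount_conj, invCount_conj]; omega)
    rw [hv] at hR
    have hR' := congrArg (MvPolynomial.aeval (R := ℤ) (S₁ := MvPolynomial (XYB n) ℤ) (theta n)) hR
    rw [map_mul, map_sub, map_sub, MvPolynomial.aeval_rename, MvPolynomial.aeval_X,
      MvPolynomial.aeval_X] at hR'
    have hren : ∀ P : MvPolynomial (XY n) ℤ,
        MvPolynomial.rename (gsw k hk) (MvPolynomial.aeval (R := ℤ) (theta n) P) =
        MvPolynomial.aeval (R := ℤ) (theta n ∘ (sxy i hi)) P := by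
      intro P
      rw [← AlgHom.comp_apply]
      congr 1
      apply MvPolynomial.algHom_ext
      rintro (a | a)
      · simp [theta, gsw, sxy, adj_rev k hk i hi hik]
      · simp [theta, gsw, sxy]
    rw [hren, ← hR'] at hZ
    have hir : i.rev = ⟨k+1, hk⟩ := by ext; rw [Fin.val_rev]; simp only; omega
    have hir2 : (⟨i+1, hi⟩ : Fin n).rev = k := by ext; rw [Fin.val_rev]; simp only; omega
    have hth : theta n (XY.x i) - theta n (XY.x ⟨i+1, hi⟩) =
        MvPolynomial.X (XYB.x k) - MvPolynomial.X (XYB.x ⟨k+1, hk⟩) := by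
      simp only [theta, hir, hir2]; ring
    rw [hth] at hZ
    refine mul_left_cancel₀ ?_ hZ
    rw [sub_ne_zero]
    intro h
    have := MvPolynomial.X_injective h
    simp [Fin.ext_iff] at this

end final


theorem statement3 {n : ℕ} (hn : 1 ≤ n)
    (S : Equiv.Perm (Fin n) → MvPolynomial (XY n) ℤ)
    -- the base case of the definition of double Schubert polynomials:
    -- `S_{w₀} = ∏_{i + j ≤ n} (xᵢ - yⱼ)` (1-indexed)
    (hbase : S Fin.revPerm =
      ∏ p ∈ Finset.univ.filter (fun p : Fin n × Fin n => (p.1 : ℕ) + (p.2 : ℕ) + 2 ≤ n),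
        (MvPolynomial.X (XY.x p.1) - MvPolynomial.X (XY.y p.2)))
    -- the divided difference recursion: if `ℓ(v sᵢ) < ℓ(v)` then
    -- `(xᵢ - xᵢ₊₁) · S_{v sᵢ} = S_v - sᵢ · S_v`
    (hrec : ∀ (v : Equiv.Perm (Fin n)) (i : Fin n) (hi : (i : ℕ) + 1 < n),
      invCount (v * adjSwap i hi) < invCount v →
      (MvPolynomial.X (XY.x i) - MvPolynomial.X (XY.x ⟨(i : ℕ) + 1, hi⟩)) *
          S (v * adjSwap i hi) =
        S v - MvPolynomial.rename (fun z : XY n => match z with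
          | XY.x k => XY.x (adjSwap i hi k)
          | XY.y k => XY.y k) (S v))
    (w : Equiv.Perm (Fin n)) :
    (GA w).coeff (n ^ 2 - invCount w) =
      (∑ d ∈ Finset.univ.filter (fun d : Pipes n => IsGPDof w d ∧ IsBumplessReduced d),
        ∏ p ∈ Finset.univ.filter (fun p : Fin n × Fin n => tile d p.1 p.2 = .blank),
          (MvPolynomial.X XYB.B - MvPolynomial.X (XYB.x p.1) + MvPolynomial.X (XYB.y p.2))) ∧
    (∑ d ∈ Finset.univ.filter (fun d : Pipes n => IsGPDof w d ∧ IsBumplessReduced d),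
        ∏ p ∈ Finset.univ.filter (fun p : Fin n × Fin n => tile d p.1 p.2 = .blank),
          (MvPolynomial.X XYB.B - MvPolynomial.X (XYB.x p.1) + MvPolynomial.X (XYB.y p.2))) =
      MvPolynomial.aeval (R := ℤ) (S₁ := MvPolynomial (XYB n) ℤ)
        (fun z : XY n => match z with
          | XY.x i => MvPolynomial.X XYB.B - MvPolynomial.X (XYB.x i.rev)
          | XY.y j => - MvPolynomial.X (XYB.y j.rev))
        (S (Fin.revPerm * w * Fin.revPerm)) := by
  have h := main_eq S hbase (by
    intro v i hi hlt
    rw [hrec v i hi hlt]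
    congr 2
    congr 1
    funext z; cases z <;> rfl) _ w rfl
  refine ⟨GA_coeff w, h.trans ?_⟩
  congr 2
  funext z; cases z <;> rfl

end GPDpaper
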